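/- arXiv:2401.16941 — 2 statements merged into one kernel-verified Lean document; each statement's English description precedes it below -/
import Mathlib

section
/- Let L be a field of characteristic 0 and let · be a deformed Laurent series product on L((T^{-1})) satisfying T·a = aT + Σ_{i≤0} δ_i(a)T^i for all a ∈ L (with maps δ_i : L → L, i ≤ 0). Suppose w : L → ℝ ∪ {−∞} is a degree map on L such that w(δ_i(a)) ≤ w(a) for all a ∈ L and all i ≤ 0. Then the set of elements Σ_{i≤n} a_i T^i of L((T^{-1})) such that i ↦ w(a_i) is bounded above forms a subring of L((T^{-1})). -/
noncomputable section

open scoped Classical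

/-- The generalized binomial coefficient `binom n k` for an integer `n` and natural `k`;
it equals `n (n-1) ⋯ (n-k+1) / k!` (an integer). -/
def zbinom (n : ℤ) (k : ℕ) : ℤ :=
  if 0 ≤ n then (n.toNat.choose k : ℤ) else (-1) ^ k * (((k : ℤ) - 1 - n).toNat.choose k : ℤ)

/-- The generalized binomial coefficient `a (a-1) ⋯ (a-k+1) / k!` in a field `K`
(of characteristic zero in all uses). -/
def gbinom {K : Type*} [Field K] (a : K) (k : ℕ) : K :=
  (∏ i ∈ Finset.range k, (a - (i : K))) / (k.factorial : K)

/-- Inverse Laurent series over `L`: formal sums `Σ_{i ∈ ℤ} a_i T^i` whose support is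
bounded above. -/
structure InvLaurent (L : Type*) [Zero L] where
  coeff : ℤ → L
  bdd' : ∃ N : ℤ, ∀ i : ℤ, N < i → coeff i = 0

namespace InvLaurent

variable {L : Type*} [Field L]

@[ext] theorem ext {f g : InvLaurent L} (h : ∀ i, f.coeff i = g.coeff i) : f = g := by
  cases f; cases g
  simp only [mk.injEq]
  funext i; exact h i

instance : Zero (InvLaurent L) := ⟨⟨fun _ => 0, ⟨0, fun _ _ => rfl⟩⟩⟩

instance : Add (InvLaurent L) :=
  ⟨fun f g => ⟨fun i => f.coeff i + g.coeff i, by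
    obtain ⟨N, hN⟩ := f.bdd'; obtain ⟨M, hM⟩ := g.bdd'
    exact ⟨max N M, fun i hi => by
      show f.coeff i + g.coeff i = 0
      rw [hN i (lt_of_le_of_lt (le_max_left _ _) hi),
        hM i (lt_of_le_of_lt (le_max_right _ _) hi), add_zero]⟩⟩⟩

instance : Neg (InvLaurent L) :=
  ⟨fun f => ⟨fun i => -f.coeff i, by
    obtain ⟨N, hN⟩ := f.bdd'
    exact ⟨N, fun i hi => by show -f.coeff i = 0; rw [hN i hi, neg_zero]⟩⟩⟩

@[simp] lemma coeff_zero (i : ℤ) : (0 : InvLaurent L).coeff i = 0 := rfl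
@[simp] lemma coeff_add (f g : InvLaurent L) (i : ℤ) :
    (f + g).coeff i = f.coeff i + g.coeff i := rfl
@[simp] lemma coeff_neg (f : InvLaurent L) (i : ℤ) : (-f).coeff i = -f.coeff i := rfl

instance : AddCommGroup (InvLaurent L) where
  add_assoc f g h := by ext i; simp [add_assoc]
  zero_add f := by ext i; simp
  add_zero f := by ext i; simp
  neg_add_cancel f := by ext i; simp
  add_comm f g := by ext i; simp [add_comm]
  nsmul := nsmulRec
  zsmul := zsmulRec

@[simp] lemma coeff_sub (f g : InvLaurent L) (i : ℤ) :
    (f - g).coeff i = f.coeff i - g.coeff i := by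
  rw [sub_eq_add_neg, coeff_add, coeff_neg, sub_eq_add_neg]

/-- The series `a T^n`. -/
def single (n : ℤ) (a : L) : InvLaurent L :=
  ⟨fun i => if i = n then a else 0, ⟨n, fun i hi => if_neg (by omega)⟩⟩

/-- The series `T^n`. -/
def T (L : Type*) [Field L] (n : ℤ) : InvLaurent L := single n 1

/-- Coefficientwise multiplication by a scalar `b ∈ L` on the left. -/
def lsmul (b : L) (f : InvLaurent L) : InvLaurent L :=
  ⟨fun i => b * f.coeff i, by
    obtain ⟨N, hN⟩ := f.bdd'
    exact ⟨N, fun i hi => by show b * f.coeff i = 0; rw [hN i hi, mul_zero]⟩⟩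

/-- The standard degree map, with values in `ℤ ∪ {-∞}`. -/
def deg (f : InvLaurent L) : WithBot ℤ :=
  if f = 0 then ⊥ else ↑(sSup {i : ℤ | f.coeff i ≠ 0})

lemma deg_eq_bot_iff (f : InvLaurent L) : deg f = ⊥ ↔ f = 0 := by
  unfold deg
  split
  · simpa
  · simp_all

lemma support_nonempty {f : InvLaurent L} (hf : f ≠ 0) :
    {i : ℤ | f.coeff i ≠ 0}.Nonempty := by
  by_contra h
  rw [Set.not_nonempty_iff_eq_empty] at h
  apply hf
  ext i
  have : i ∉ ({i : ℤ | f.coeff i ≠ 0}) := by rw [h]; exact Set.notMem_empty i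
  simpa using this

lemma support_bddAbove (f : InvLaurent L) : BddAbove {i : ℤ | f.coeff i ≠ 0} := by
  obtain ⟨N, hN⟩ := f.bdd'
  exact ⟨N, fun i hi => by by_contra h; exact hi (hN i (by omega))⟩

lemma le_deg {f : InvLaurent L} {i : ℤ} (h : f.coeff i ≠ 0) : (i : WithBot ℤ) ≤ deg f := by
  have hf : f ≠ 0 := by
    intro h0; rw [h0] at h; exact h rfl
  rw [deg, if_neg hf]
  exact_mod_cast le_csSup (support_bddAbove f) h

lemma deg_neg (f : InvLaurent L) : deg (-f) = deg f := by
  unfold deg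
  have h0 : -f = 0 ↔ f = 0 := by
    constructor
    · intro h; ext i
      have := congrArg (fun g => InvLaurent.coeff g i) h
      simp only [coeff_neg, coeff_zero, neg_eq_zero] at this
      simpa using this
    · intro h; rw [h]; ext i; simp
  have hs : {i : ℤ | (-f).coeff i ≠ 0} = {i : ℤ | f.coeff i ≠ 0} := by
    ext i; simp
  rw [hs]
  by_cases h : f = 0
  · rw [if_pos (h0.mpr h), if_pos h]
  · rw [if_neg (fun hh => h (h0.mp hh)), if_neg h]

lemma deg_add_le (f g : InvLaurent L) : deg (f + g) ≤ max (deg f) (deg g) := by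
  by_cases h : f + g = 0
  · rw [(deg_eq_bot_iff _).mpr h]; exact bot_le
  · rw [deg, if_neg h]
    have hne := support_nonempty h
    have : sSup {i : ℤ | (f + g).coeff i ≠ 0} ∈ {i : ℤ | (f + g).coeff i ≠ 0} := by
      obtain ⟨N, hN⟩ := support_bddAbove (f + g)
      obtain ⟨m, hm, hmax⟩ := Int.exists_greatest_of_bdd ⟨N, fun i hi => hN hi⟩ hne
      have : sSup {i : ℤ | (f + g).coeff i ≠ 0} = m :=
        le_antisymm (csSup_le hne hmax) (le_csSup (support_bddAbove _) hm)
      rw [this]; exact hm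
    set m := sSup {i : ℤ | (f + g).coeff i ≠ 0} with hm
    have hc : (f + g).coeff m ≠ 0 := this
    rw [coeff_add] at hc
    rcases (by by_contra hh; push_neg at hh; rw [hh.1, hh.2, add_zero] at hc; exact hc rfl :
        f.coeff m ≠ 0 ∨ g.coeff m ≠ 0) with hf | hg
    · exact le_trans (le_deg hf) (le_max_left _ _)
    · exact le_trans (le_deg hg) (le_max_right _ _)

/-- real-exponential of a degree value: `e^d`, with `e^{-∞} = 0`. -/
def edeg : WithBot ℤ → ℝ
  | ⊥ => 0
  | (n : ℤ) => Real.exp n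

lemma edeg_nonneg (d : WithBot ℤ) : 0 ≤ edeg d := by
  cases d with
  | bot => exact le_refl 0
  | coe n => exact le_of_lt (Real.exp_pos _)

lemma edeg_mono {d d' : WithBot ℤ} (h : d ≤ d') : edeg d ≤ edeg d' := by
  cases d with
  | bot => exact edeg_nonneg d'
  | coe n =>
    cases d' with
    | bot => exact absurd h (by simp)
    | coe m =>
      have : n ≤ m := by exact_mod_cast h
      exact Real.exp_le_exp.mpr (by exact_mod_cast this)

lemma edeg_eq_zero_iff (d : WithBot ℤ) : edeg d = 0 ↔ d = ⊥ := by
  cases d with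
  | bot => simp [edeg]
  | coe n =>
    simp only [edeg]
    constructor
    · intro h; exact absurd h (ne_of_gt (Real.exp_pos _))
    · intro h; exact absurd h (by simp)

noncomputable instance : MetricSpace (InvLaurent L) where
  dist f g := edeg (deg (f - g))
  dist_self f := by
    show edeg (deg (f - f)) = 0
    rw [sub_self, (deg_eq_bot_iff (0 : InvLaurent L)).mpr rfl]
    rfl
  dist_comm f g := by
    show edeg (deg (f - g)) = edeg (deg (g - f))
    have h : g - f = -(f - g) := by abel
    rw [h, deg_neg]
  dist_triangle f g h := by
    show edeg (deg (f - h)) ≤ edeg (deg (f - g)) + edeg (deg (g - h))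
    have h1 : f - h = (f - g) + (g - h) := by abel
    have h2 : deg (f - h) ≤ max (deg (f - g)) (deg (g - h)) := by
      rw [h1]; exact deg_add_le _ _
    calc edeg (deg (f - h)) ≤ edeg (max (deg (f - g)) (deg (g - h))) := edeg_mono h2
      _ ≤ edeg (deg (f - g)) + edeg (deg (g - h)) := by
          rcases max_cases (deg (f - g)) (deg (g - h)) with ⟨hm, _⟩ | ⟨hm, _⟩ <;> rw [hm]
          · exact le_add_of_nonneg_right (edeg_nonneg _)
          · exact le_add_of_nonneg_left (edeg_nonneg _)
  eq_of_dist_eq_zero := by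
    intro f g hd
    have hd' : edeg (deg (f - g)) = 0 := hd
    have : deg (f - g) = ⊥ := (edeg_eq_zero_iff _).mp hd'
    have := (deg_eq_bot_iff _).mp this
    exact sub_eq_zero.mp this

end InvLaurent

open InvLaurent

/-- A deformed Laurent series product on `L((T⁻¹))`:
an associative, distributive, jointly continuous multiplication which restricts to left
scalar multiplication by `L`, satisfies `T^i · T^j = T^{i+j}`, and is compatible with the
standard degree map. -/
structure DeformedProduct (L : Type*) [Field L] where
  mul : InvLaurent L → InvLaurent L → InvLaurent L
  mul_assoc : ∀ f g h, mul (mul f g) h = mul f (mul g h)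
  left_distrib : ∀ f g h, mul f (g + h) = mul f g + mul f h
  right_distrib : ∀ f g h, mul (f + g) h = mul f h + mul g h
  continuous_mul : Continuous fun p : InvLaurent L × InvLaurent L => mul p.1 p.2
  lsmul_eq : ∀ (b : L) (f : InvLaurent L), mul (single 0 b) f = lsmul b f
  T_mul_T : ∀ i j : ℤ, mul (T L i) (T L j) = T L (i + j)
  deg_mul : ∀ f g, deg (mul f g) = deg f + deg g

/-- `HasDelta μ δ` says that `T · a = a T + Σ_{i ≤ 0} δ_i(a) T^i` for all `a ∈ L`. -/
def HasDelta {L : Type*} [Field L] (μ : DeformedProduct L) (δ : ℤ → L → L) : Prop :=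
  ∀ (a : L) (i : ℤ), (μ.mul (T L 1) (single 0 a)).coeff i =
    if i = 1 then a else if i ≤ 0 then δ i a else 0

/-- Composition `δ_{j₁} ∘ ⋯ ∘ δ_{j_k}` along a list `[j₁, …, j_k]`. -/
def dcomp {L : Type*} [Field L] (δ : ℤ → L → L) : List ℤ → L → L
  | [], a => a
  | j :: js, a => δ j (dcomp δ js a)

/-- The Leibniz-type identity (★) for the family `δ_i`, `i ≤ 0`. -/
def LeibnizStar {L : Type*} [Field L] (δ : ℤ → L → L) : Prop :=
  ∀ i : ℤ, i ≤ 0 → ∀ a b : L,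
    δ i (a * b) = a * δ i b + δ i a * b +
      ∑ᶠ p : ℤ × List ℤ,
        if p.1 ≤ 0 ∧ p.2 ≠ [] ∧ (∀ j ∈ p.2, j ≤ 0) ∧
            p.2.sum - (p.2.length : ℤ) + p.1 = i
        then zbinom p.1 p.2.length • (δ p.1 a * dcomp δ p.2 b) else 0

end

/-- A degree map on a ring `R`: a function `w : R → ℝ ∪ {-∞}` with
`w(fg) = w(f) + w(g)`, `w(f+g) ≤ max (w f) (w g)`, and `w f = -∞ ↔ f = 0`. -/
structure IsDegreeMap {R : Type*} [Ring R] (w : R → WithBot ℝ) : Prop where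
  map_mul : ∀ f g, w (f * g) = w f + w g
  add_le : ∀ f g, w (f + g) ≤ max (w f) (w g)
  bot_iff : ∀ f, w f = ⊥ ↔ f = 0

namespace BddAux

open InvLaurent

variable {L : Type*} [Field L]

lemma deg_le_of {f : InvLaurent L} {n : ℤ} (h : ∀ i, n < i → f.coeff i = 0) :
    deg f ≤ (n : WithBot ℤ) := by
  unfold deg
  split_ifs with h0
  · exact bot_le
  · have : sSup {i : ℤ | f.coeff i ≠ 0} ≤ n :=
      csSup_le (support_nonempty h0) (fun i hi => by
        by_contra hc
        exact hi (h i (by omega)))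
    exact_mod_cast this

/-- The part of `f` in degrees at least `n`. -/
def trunc (n : ℤ) (f : InvLaurent L) : InvLaurent L :=
  ⟨fun i => if n ≤ i then f.coeff i else 0, by
    obtain ⟨N, hN⟩ := f.bdd'
    exact ⟨N, fun i hi => by
      show (if n ≤ i then f.coeff i else 0) = 0
      rw [hN i hi, ite_self]⟩⟩

lemma coeff_trunc (n : ℤ) (f : InvLaurent L) (i : ℤ) :
    (trunc n f).coeff i = if n ≤ i then f.coeff i else 0 := rfl

lemma coeff_single (n : ℤ) (a : L) (i : ℤ) :
    (single n a).coeff i = if i = n then a else 0 := by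
  unfold single
  congr

lemma trunc_succ (n : ℤ) (f : InvLaurent L) :
    trunc n f = trunc (n + 1) f + single n (f.coeff n) := by
  ext i
  rw [coeff_add, coeff_trunc, coeff_trunc, coeff_single]
  by_cases h1 : i = n
  · subst h1; simp
  · by_cases h2 : n ≤ i
    · rw [if_pos h2, if_pos (by omega), if_neg h1, add_zero]
    · rw [if_neg h2, if_neg (by omega), if_neg h1, add_zero]

lemma trunc_mem (φ : InvLaurent L →+ L) (S : AddSubmonoid L) (f : InvLaurent L) (k : ℤ)
    (h : ∀ i, k ≤ i → φ (single i (f.coeff i)) ∈ S) : φ (trunc k f) ∈ S := by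
  obtain ⟨N, hN⟩ := f.bdd'
  have key : ∀ m : ℕ, ∀ n : ℤ, k ≤ n → N + 1 - n ≤ m → φ (trunc n f) ∈ S := by
    intro m
    induction m with
    | zero =>
      intro n _ hn
      have : trunc n f = 0 := by
        ext i
        rw [coeff_trunc, coeff_zero]
        split_ifs with hi
        · exact hN i (by push_cast at hn; omega)
        · rfl
      rw [this, map_zero]
      exact S.zero_mem
    | succ m ih =>
      intro n hk hn
      rw [trunc_succ, map_add]
      exact S.add_mem (ih (n + 1) (by omega) (by push_cast at hn; omega)) (h n hk)
  exact key (N + 1 - k).toNat k le_rfl (Int.self_le_toNat _)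

lemma coeff_mul_eq_zero (μ : DeformedProduct L) {f g : InvLaurent L} {a b k : ℤ}
    (hf : ∀ i, a ≤ i → f.coeff i = 0) (hg : ∀ i, b < i → g.coeff i = 0) (hk : a + b ≤ k) :
    (μ.mul f g).coeff k = 0 := by
  by_contra hne
  have h1 := le_deg hne
  rw [μ.deg_mul] at h1
  have h2 : deg f ≤ ((a - 1 : ℤ) : WithBot ℤ) := deg_le_of (fun i hi => hf i (by omega))
  have h3 : deg g ≤ (b : WithBot ℤ) := deg_le_of hg
  have h4 := h1.trans (add_le_add h2 h3)
  have h5 : k ≤ a - 1 + b := by exact_mod_cast h4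
  omega

/-- `f ↦` the coefficient of index `k` of `f · g`. -/
def cl (μ : DeformedProduct L) (g : InvLaurent L) (k : ℤ) : InvLaurent L →+ L :=
  AddMonoidHom.mk' (fun f => (μ.mul f g).coeff k) (fun a b => by
    rw [μ.right_distrib, coeff_add])

/-- `g ↦` the coefficient of index `k` of `f · g`. -/
def cr (μ : DeformedProduct L) (f : InvLaurent L) (k : ℤ) : InvLaurent L →+ L :=
  AddMonoidHom.mk' (fun g => (μ.mul f g).coeff k) (fun a b => by
    rw [μ.left_distrib, coeff_add])

/-- The coefficient of index `k`. -/
def cf (k : ℤ) : InvLaurent L →+ L :=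
  AddMonoidHom.mk' (fun g => g.coeff k) (fun a b => coeff_add a b k)

lemma sub_trunc (n : ℤ) (f : InvLaurent L) (i : ℤ) (hi : n ≤ i) :
    (f - trunc n f).coeff i = 0 := by
  rw [coeff_sub, coeff_trunc, if_pos hi, sub_self]

lemma coeff_lsmul (b : L) (f : InvLaurent L) (i : ℤ) :
    (lsmul b f).coeff i = b * f.coeff i := rfl

lemma single_eq (μ : DeformedProduct L) (i : ℤ) (a : L) :
    single i a = μ.mul (single 0 a) (T L i) := by
  rw [μ.lsmul_eq]
  ext j
  rw [coeff_lsmul, T, coeff_single, coeff_single]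
  split_ifs <;> simp

lemma single_mul (μ : DeformedProduct L) (i : ℤ) (a : L) (g : InvLaurent L) (k : ℤ) :
    (μ.mul (single i a) g).coeff k = a * (μ.mul (T L i) g).coeff k := by
  rw [single_eq μ, μ.mul_assoc, μ.lsmul_eq, coeff_lsmul]

lemma T_bdd (n i : ℤ) (hi : n < i) : (T L n).coeff i = 0 := by
  rw [T, coeff_single, if_neg (by omega)]

lemma mul_T (μ : DeformedProduct L) (f : InvLaurent L) (i k : ℤ) :
    (μ.mul f (T L i)).coeff k = f.coeff (k - i) := by
  have h1 : (cl μ (T L i) k - cf (k - i) : InvLaurent L →+ L) (trunc (k - i) f) ∈ (⊥ : AddSubmonoid L) := by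
    apply trunc_mem
    intro j _
    rw [AddSubmonoid.mem_bot]
    show (μ.mul (single j (f.coeff j)) (T L i)).coeff k -
      (single j (f.coeff j)).coeff (k - i) = 0
    rw [single_mul, μ.T_mul_T, T, coeff_single, coeff_single]
    by_cases h : k = j + i
    · rw [if_pos h, if_pos (by omega)]; ring
    · rw [if_neg h, if_neg (by omega)]; ring
  rw [AddSubmonoid.mem_bot] at h1
  have h1' : (μ.mul (trunc (k - i) f) (T L i)).coeff k -
      (trunc (k - i) f).coeff (k - i) = 0 := h1
  have h2 := coeff_mul_eq_zero μ (sub_trunc (k - i) f) (T_bdd i) (k := k) (by omega)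
  have h3 : f = (f - trunc (k - i) f) + trunc (k - i) f := by abel
  rw [h3, μ.right_distrib, coeff_add, h2, zero_add, sub_eq_zero.mp h1', coeff_trunc,
    if_pos le_rfl, ← h3]

section deg

variable {w : L → WithBot ℝ}

lemma w_neg (hw : IsDegreeMap w) (x : L) : w (-x) = w x := by
  have h1 : w (1 : L) ≠ ⊥ := fun h => one_ne_zero ((hw.bot_iff 1).mp h)
  have h2 : w (-1 : L) ≠ ⊥ := fun h => neg_ne_zero.mpr one_ne_zero ((hw.bot_iff (-1)).mp h)
  have e1 : w (1 : L) = w 1 + w 1 := by simpa using hw.map_mul 1 1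
  have e2 : w (1 : L) = w (-1) + w (-1) := by simpa using hw.map_mul (-1) (-1)
  have e3 : w (-x) = w (-1) + w x := by simpa using hw.map_mul (-1) x
  obtain ⟨a, ha⟩ := WithBot.ne_bot_iff_exists.mp h1
  obtain ⟨b, hb⟩ := WithBot.ne_bot_iff_exists.mp h2
  rw [← ha] at e1 e2
  rw [← hb] at e2 e3
  have e1' : a = a + a := by exact_mod_cast e1
  have e2' : a = b + b := by exact_mod_cast e2
  have hb0 : b = 0 := by linarith
  rw [e3, hb0]
  simp

/-- The additive submonoid of elements of degree at most `C`. -/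
def ball (hw : IsDegreeMap w) (C : WithBot ℝ) : AddSubmonoid L where
  carrier := {x | w x ≤ C}
  add_mem' := fun ha hb => (hw.add_le _ _).trans (max_le ha hb)
  zero_mem' := by
    show w 0 ≤ C
    rw [(hw.bot_iff 0).mpr rfl]
    exact bot_le

lemma neg_mem_ball (hw : IsDegreeMap w) {C : WithBot ℝ} {x : L} (hx : x ∈ ball hw C) :
    -x ∈ ball hw C := by
  show w (-x) ≤ C
  rw [w_neg hw]
  exact hx

lemma sub_mem_ball (hw : IsDegreeMap w) {C : WithBot ℝ} {x y : L} (hx : x ∈ ball hw C)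
    (hy : y ∈ ball hw C) : x - y ∈ ball hw C := by
  rw [sub_eq_add_neg]
  exact (ball hw C).add_mem hx (neg_mem_ball hw hy)

lemma T_single (μ : DeformedProduct L) {δ : ℤ → L → L} (hδ : HasDelta μ δ) (j k : ℤ) (a : L) :
    (μ.mul (T L 1) (single j a)).coeff k =
      if k - j = 1 then a else if k - j ≤ 0 then δ (k - j) a else 0 := by
  rw [single_eq μ j a, ← μ.mul_assoc, mul_T, hδ]

lemma T_mul_sub (μ : DeformedProduct L) {δ : ℤ → L → L} (hδ : HasDelta μ δ)
    (hw : IsDegreeMap w) (hwδ : ∀ (a : L) (i : ℤ), i ≤ 0 → w (δ i a) ≤ w a)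
    {C : WithBot ℝ} (h : InvLaurent L) (k : ℤ) (hh : ∀ i, k ≤ i → h.coeff i ∈ ball hw C) :
    (μ.mul (T L 1) h).coeff k - h.coeff (k - 1) ∈ ball hw C := by
  have h1 : cr μ (T L 1) k (trunc k h) ∈ ball hw C := by
    apply trunc_mem
    intro i hi
    show (μ.mul (T L 1) (single i (h.coeff i))).coeff k ∈ ball hw C
    rw [T_single μ hδ, if_neg (by omega), if_pos (by omega)]
    exact (hwδ _ _ (by omega)).trans (hh i hi)
  have h1' : (μ.mul (T L 1) (trunc k h)).coeff k ∈ ball hw C := h1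
  have h2 : (μ.mul (T L 1) (h - trunc (k - 1) h)).coeff k = 0 :=
    coeff_mul_eq_zero μ (a := 2) (b := k - 2) (fun i hi => T_bdd 1 i (by omega))
      (fun i hi => sub_trunc (k - 1) h i (by omega)) (by omega)
  have h3 : h = (h - trunc (k - 1) h) + (trunc k h + single (k - 1) (h.coeff (k - 1))) := by
    have := trunc_succ (k - 1) h
    rw [sub_add_cancel] at this
    rw [← this]
    abel
  have h4 : (μ.mul (T L 1) h).coeff k = (μ.mul (T L 1) (trunc k h)).coeff k
      + h.coeff (k - 1) := by
    conv_lhs => rw [h3]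
    rw [μ.left_distrib, μ.left_distrib, coeff_add, coeff_add, h2, zero_add, T_single μ hδ,
      if_pos (by omega)]
  rw [h4, add_sub_cancel_right]
  exact h1'

lemma T_zpow_mul (μ : DeformedProduct L) {δ : ℤ → L → L} (hδ : HasDelta μ δ)
    (hw : IsDegreeMap w) (hwδ : ∀ (a : L) (i : ℤ), i ≤ 0 → w (δ i a) ≤ w a)
    {C : WithBot ℝ} (g : InvLaurent L) (hg : ∀ i, g.coeff i ∈ ball hw C) (n : ℤ) :
    ∀ k, (μ.mul (T L n) g).coeff k ∈ ball hw C := by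
  induction n using Int.induction_on with
  | zero =>
    intro k
    rw [T, μ.lsmul_eq, coeff_lsmul, one_mul]
    exact hg k
  | succ n ih =>
    intro k
    have e : μ.mul (T L (n + 1)) g = μ.mul (T L 1) (μ.mul (T L n) g) := by
      rw [← μ.mul_assoc, μ.T_mul_T, add_comm]
    have := (ball hw C).add_mem
      (T_mul_sub μ hδ hw hwδ (μ.mul (T L n) g) k (fun i _ => ih i)) (ih (k - 1))
    rwa [sub_add_cancel, ← e] at this
  | pred n ih =>
    have e : μ.mul (T L 1) (μ.mul (T L (-n - 1)) g) = μ.mul (T L (-n)) g := by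
      rw [← μ.mul_assoc, μ.T_mul_T, add_sub_cancel]
    set h := μ.mul (T L (-n - 1)) g with hh
    obtain ⟨N, hN⟩ := h.bdd'
    have key : ∀ m : ℕ, ∀ k : ℤ, N + 1 - k ≤ m → h.coeff k ∈ ball hw C := by
      intro m
      induction m with
      | zero =>
        intro k hk
        rw [hN k (by push_cast at hk; omega)]
        exact (ball hw C).zero_mem
      | succ m ihm =>
        intro k hk
        have h1 := T_mul_sub μ hδ hw hwδ (C := C) h (k + 1)
          (fun i hi => ihm i (by push_cast at hk; omega))
        rw [e, add_sub_cancel_right] at h1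
        have h2 := sub_mem_ball hw (ih (k + 1)) h1
        rwa [sub_sub_cancel] at h2
    intro k
    exact key (N + 1 - k).toNat k (Int.self_le_toNat _)

lemma mul_mem (μ : DeformedProduct L) {δ : ℤ → L → L} (hδ : HasDelta μ δ)
    (hw : IsDegreeMap w) (hwδ : ∀ (a : L) (i : ℤ), i ≤ 0 → w (δ i a) ≤ w a)
    {C D : WithBot ℝ} (f g : InvLaurent L) (hf : ∀ i, f.coeff i ∈ ball hw C)
    (hg : ∀ i, g.coeff i ∈ ball hw D) (k : ℤ) :
    (μ.mul f g).coeff k ∈ ball hw (C + D) := by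
  obtain ⟨M, hM⟩ := g.bdd'
  have h1 : cl μ g k (trunc (k - M) f) ∈ ball hw (C + D) := by
    apply trunc_mem
    intro i _
    show (μ.mul (single i (f.coeff i)) g).coeff k ∈ ball hw (C + D)
    rw [single_mul]
    show w _ ≤ _
    rw [hw.map_mul]
    exact add_le_add (hf i) (T_zpow_mul μ hδ hw hwδ g hg i k)
  have h1' : (μ.mul (trunc (k - M) f) g).coeff k ∈ ball hw (C + D) := h1
  have h2 := coeff_mul_eq_zero μ (sub_trunc (k - M) f) hM (k := k) (by omega)
  have h3 : f = (f - trunc (k - M) f) + trunc (k - M) f := by abel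
  rw [h3, μ.right_distrib, coeff_add, h2, zero_add]
  exact h1'

end deg

end BddAux

open InvLaurent in
/-- let `L` be a field of characteristic `0` with a deformed Laurent series product
on `L((T⁻¹))` satisfying `T·a = aT + Σ_{i≤0} δ_i(a)T^i`, and let `w` be a degree map on `L` with
`w(δ_i(a)) ≤ w(a)` for all `a` and all `i ≤ 0`.  Then the elements `Σ_{i≤n} a_i T^i` with
`i ↦ w(a_i)` bounded above form a subring: they contain `1 = T^0` and are closed under
addition, negation and the deformed product. -/
theorem deformedProduct_boundedSubring (L : Type*) [Field L] [CharZero L]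
    (μ : DeformedProduct L) (δ : ℤ → L → L) (hδ : HasDelta μ δ)
    (w : L → WithBot ℝ) (hw : IsDegreeMap w)
    (hwδ : ∀ (a : L) (i : ℤ), i ≤ 0 → w (δ i a) ≤ w a) :
    T L 0 ∈ {f : InvLaurent L | ∃ C : ℝ, ∀ i : ℤ, w (f.coeff i) ≤ (C : WithBot ℝ)} ∧
    ∀ f ∈ {f : InvLaurent L | ∃ C : ℝ, ∀ i : ℤ, w (f.coeff i) ≤ (C : WithBot ℝ)},
      ∀ g ∈ {f : InvLaurent L | ∃ C : ℝ, ∀ i : ℤ, w (f.coeff i) ≤ (C : WithBot ℝ)},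
        f + g ∈ {f : InvLaurent L | ∃ C : ℝ, ∀ i : ℤ, w (f.coeff i) ≤ (C : WithBot ℝ)} ∧
        -f ∈ {f : InvLaurent L | ∃ C : ℝ, ∀ i : ℤ, w (f.coeff i) ≤ (C : WithBot ℝ)} ∧
        μ.mul f g ∈ {f : InvLaurent L | ∃ C : ℝ, ∀ i : ℤ, w (f.coeff i) ≤ (C : WithBot ℝ)} := by
  refine ⟨?_, ?_⟩
  · have h1 : w (1 : L) ≠ ⊥ := fun h => one_ne_zero ((hw.bot_iff 1).mp h)
    obtain ⟨a, ha⟩ := WithBot.ne_bot_iff_exists.mp h1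
    refine ⟨a, fun i => ?_⟩
    rw [T, BddAux.coeff_single]
    split_ifs
    · exact ha.ge
    · rw [(hw.bot_iff 0).mpr rfl]
      exact bot_le
  · rintro f ⟨C, hC⟩ g ⟨D, hD⟩
    refine ⟨⟨max C D, fun i => ?_⟩, ⟨C, fun i => ?_⟩, ⟨C + D, fun i => ?_⟩⟩
    · rw [coeff_add]
      refine (hw.add_le _ _).trans (max_le ((hC i).trans ?_) ((hD i).trans ?_))
      · exact_mod_cast le_max_left C D
      · exact_mod_cast le_max_right C D
    · rw [coeff_neg, BddAux.w_neg hw]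
      exact hC i
    · have := BddAux.mul_mem μ hδ hw hwδ f g hC hD i
      rw [WithBot.coe_add]
      exact this
end

section
/- Let L be a field of characteristic 0 and let · be a deformed Laurent series product on D = L((T^{-1})) satisfying T·a = aT + Σ_{i≤0} δ_i(a)T^i for all a ∈ L (with maps δ_i : L → L, i ≤ 0). Assume δ_i ≠ 0 for some i ≤ 0, let i_0 = max{i ≤ 0 : δ_i ≠ 0}, and let K = ∩_{i≤0} Ker(δ_i) (the center of D). Assume K is algebraically closed and Ker(δ_{i_0}) = K. Then D satisfies the commutative centralizer condition: for every z ∈ D with z ∉ K, the centralizer {w ∈ D : z·w = w·z} is a commutative subring of D. -/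
namespace CCC

open InvLaurent

variable {L : Type*} [Field L]

/-- The underlying type of the ring attached to a deformed product. -/
def Dm (_μ : DeformedProduct L) := InvLaurent L

variable {μ : DeformedProduct L}

instance : AddCommGroup (Dm μ) := inferInstanceAs (AddCommGroup (InvLaurent L))

/-- coefficient -/
def cf (f : Dm μ) (i : ℤ) : L := InvLaurent.coeff f i

/-- monomial -/
noncomputable def sg (μ : DeformedProduct L) (n : ℤ) (a : L) : Dm μ := single n a

instance : Mul (Dm μ) := ⟨fun f g => μ.mul f g⟩

theorem cf_ext {f g : Dm μ} (h : ∀ i, cf f i = cf g i) : f = g := InvLaurent.ext h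

theorem cf_add (f g : Dm μ) (i : ℤ) : cf (f + g) i = cf f i + cf g i := rfl
theorem cf_neg (f : Dm μ) (i : ℤ) : cf (-f) i = - cf f i := rfl
theorem cf_zero (i : ℤ) : cf (0 : Dm μ) i = 0 := rfl
theorem cf_sub (f g : Dm μ) (i : ℤ) : cf (f - g) i = cf f i - cf g i :=
  InvLaurent.coeff_sub (L := L) f g i
theorem cf_sg (n : ℤ) (a : L) (i : ℤ) : cf (sg μ n a) i = if i = n then a else 0 := by
  show (single n a).coeff i = _
  simp only [single]

theorem cf_smul (b : L) (f : Dm μ) (i : ℤ) : cf (sg μ 0 b * f) i = b * cf f i := by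
  exact congrArg (fun g => InvLaurent.coeff g i) (μ.lsmul_eq b f)

theorem exists_deg (f : Dm μ) (hf : f ≠ 0) : ∃ n : ℤ, deg (L := L) f = (n : WithBot ℤ) ∧
    cf f n ≠ 0 ∧ ∀ i, n < i → cf f i = 0 := by
  have hf' : (f : InvLaurent L) ≠ (0 : InvLaurent L) := hf
  obtain ⟨N, hN⟩ := support_bddAbove (L := L) f
  have hne := support_nonempty (L := L) hf'
  obtain ⟨m, hm, hmax⟩ := Int.exists_greatest_of_bdd ⟨N, fun i hi => hN hi⟩ hne
  have h1 : sSup {i : ℤ | InvLaurent.coeff f i ≠ 0} = m :=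
    le_antisymm (csSup_le hne hmax) (le_csSup (support_bddAbove _) hm)
  refine ⟨m, ?_, hm, ?_⟩
  · have h2 : deg (L := L) f = ↑(sSup {i : ℤ | InvLaurent.coeff f i ≠ 0}) := if_neg hf'
    rw [h2, h1]
  · intro i hi
    by_contra h
    have := hmax i h
    omega

/-- `f` has exact degree `n`. -/
def IsDeg (f : Dm μ) (n : ℤ) : Prop := cf f n ≠ 0 ∧ ∀ i, n < i → cf f i = 0

theorem IsDeg.ne_zero {f : Dm μ} {n : ℤ} (h : IsDeg f n) : f ≠ 0 := by
  rintro rfl; exact h.1 rfl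

theorem isDeg_exists {f : Dm μ} (hf : f ≠ 0) : ∃ n, IsDeg f n := by
  obtain ⟨n, _, h⟩ := exists_deg f hf
  exact ⟨n, h⟩

theorem IsDeg.unique {f : Dm μ} {n m : ℤ} (h : IsDeg f n) (h' : IsDeg f m) : n = m := by
  rcases lt_trichotomy n m with hl | hl | hl
  · exact absurd (h.2 _ hl) h'.1
  · exact hl
  · exact absurd (h'.2 _ hl) h.1

theorem isDeg_iff {f : Dm μ} {n : ℤ} : IsDeg f n ↔ deg (L := L) f = (n : WithBot ℤ) := by
  constructor
  · intro h
    obtain ⟨m, h1, h2⟩ := exists_deg f h.ne_zero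
    rw [h.unique h2, h1]
  · intro h
    have hf : f ≠ 0 := by
      intro h0
      have := (deg_eq_bot_iff (L := L) f).mpr h0
      rw [this] at h
      exact absurd h (by simp)
    obtain ⟨m, h1, h2⟩ := exists_deg f hf
    rw [h1] at h
    have : m = n := by exact_mod_cast h
    exact this ▸ h2

theorem IsDeg.mul {f g : Dm μ} {n m : ℤ} (h : IsDeg f n) (h' : IsDeg g m) :
    IsDeg (f * g) (n + m) := by
  rw [isDeg_iff] at *
  have := μ.deg_mul f g
  rw [h, h'] at this
  exact_mod_cast this

noncomputable instance : One (Dm μ) := ⟨sg μ 0 1⟩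

theorem isDeg_sg {n : ℤ} {a : L} (ha : a ≠ 0) : IsDeg (sg μ n a) n :=
  ⟨by simpa [cf_sg], fun i hi => by rw [cf_sg, if_neg (by omega)]⟩

theorem zmul (f : Dm μ) : (0 : Dm μ) * f = 0 := by
  have := μ.right_distrib (0 : InvLaurent L) 0 f
  rw [add_zero] at this
  exact left_eq_add.mp this

theorem mulz (f : Dm μ) : f * (0 : Dm μ) = 0 := by
  have := μ.left_distrib f (0 : InvLaurent L) 0
  rw [add_zero] at this
  exact left_eq_add.mp this

theorem onemul (f : Dm μ) : (1 : Dm μ) * f = f :=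
  cf_ext fun i => by
    show cf (sg μ 0 1 * f) i = _
    rw [cf_smul, one_mul]

theorem rdist (f g h : Dm μ) : (f + g) * h = f * h + g * h := μ.right_distrib f g h

theorem mulone (f : Dm μ) : f * (1 : Dm μ) = f := by
  by_contra hne
  have h0 : f * 1 - f ≠ 0 := sub_ne_zero.mpr hne
  obtain ⟨n, hn⟩ := isDeg_exists h0
  have h1 : IsDeg (1 : Dm μ) 0 := isDeg_sg one_ne_zero
  have h2 := (hn.mul h1).ne_zero
  apply h2
  have h3 : (f * 1 - f) * 1 + f * 1 = f * 1 := by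
    rw [← rdist, sub_add_cancel]
    have := μ.mul_assoc f (1 : Dm μ) (1 : Dm μ)
    have e : (f * 1) * 1 = f * ((1 : Dm μ) * 1) := this
    rw [e, onemul]
  exact add_eq_right.mp h3

noncomputable instance : Ring (Dm μ) :=
  { (inferInstance : AddCommGroup (Dm μ)), (inferInstance : Mul (Dm μ)),
    (inferInstance : One (Dm μ)) with
    mul_assoc := fun f g h => μ.mul_assoc f g h
    left_distrib := fun f g h => μ.left_distrib f g h
    right_distrib := fun f g h => μ.right_distrib f g h
    zero_mul := zmul
    mul_zero := mulz
    one_mul := onemul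
    mul_one := mulone }

/-- Elements of degree at most `n`. -/
def O (μ : DeformedProduct L) (n : ℤ) : AddSubgroup (Dm μ) where
  carrier := {f | ∀ i, n < i → cf f i = 0}
  add_mem' := fun {a b} ha hb i hi => by rw [cf_add, ha i hi, hb i hi, add_zero]
  zero_mem' := fun i _ => rfl
  neg_mem' := fun {a} ha i hi => by rw [cf_neg, ha i hi, neg_zero]

theorem mem_O {f : Dm μ} {n : ℤ} : f ∈ O μ n ↔ ∀ i, n < i → cf f i = 0 := Iff.rfl

theorem O_mono {n m : ℤ} (h : n ≤ m) {f : Dm μ} (hf : f ∈ O μ n) : f ∈ O μ m :=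
  fun i hi => hf i (by omega)

theorem IsDeg.mem {f : Dm μ} {n : ℤ} (h : IsDeg f n) : f ∈ O μ n := h.2

theorem IsDeg.le_of_mem {f : Dm μ} {n m : ℤ} (h : IsDeg f n) (hf : f ∈ O μ m) : n ≤ m := by
  by_contra hlt
  exact h.1 (hf n (by omega))

theorem O_mul {n m k : ℤ} {f g : Dm μ} (hf : f ∈ O μ n) (hg : g ∈ O μ m) (hk : n + m ≤ k) :
    f * g ∈ O μ k := by
  by_cases h0 : f = 0
  · rw [h0, zero_mul]; exact zero_mem _
  by_cases h1 : g = 0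
  · rw [h1, mul_zero]; exact zero_mem _
  obtain ⟨a, ha⟩ := isDeg_exists h0
  obtain ⟨b, hb⟩ := isDeg_exists h1
  have := ha.le_of_mem hf
  have := hb.le_of_mem hg
  exact O_mono (by omega) (ha.mul hb).mem

theorem sg_mem {n k : ℤ} (a : L) (h : n ≤ k) : sg μ n a ∈ O μ k :=
  fun i hi => by rw [cf_sg, if_neg (by omega)]

theorem sg_add (n : ℤ) (a b : L) : sg μ n (a + b) = sg μ n a + sg μ n b :=
  cf_ext fun i => by simp only [cf_sg, cf_add]; split_ifs <;> simp

theorem sg_sub (n : ℤ) (a b : L) : sg μ n (a - b) = sg μ n a - sg μ n b :=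
  cf_ext fun i => by simp only [cf_sg, cf_sub]; split_ifs <;> simp

theorem sg0_mul (b : L) (n : ℤ) (a : L) : sg μ 0 b * sg μ n a = sg μ n (b * a) :=
  cf_ext fun i => by rw [cf_smul]; simp only [cf_sg]; split_ifs <;> simp

theorem T_mul (n m : ℤ) : sg μ n 1 * sg μ m 1 = sg μ (n + m) 1 := μ.T_mul_T n m

theorem sg_eq (n : ℤ) (a : L) : sg μ n a = sg μ 0 a * sg μ n 1 := by rw [sg0_mul, mul_one]

theorem sg_mul_T (n m : ℤ) (a : L) : sg μ n a * sg μ m 1 = sg μ (n + m) a := by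
  rw [sg_eq n a, mul_assoc, T_mul, ← sg_eq]

theorem sub_sg_mem {n : ℤ} {f : Dm μ} (hf : f ∈ O μ n) : f - sg μ n (cf f n) ∈ O μ (n - 1) := by
  intro i hi
  rw [cf_sub, cf_sg]
  split_ifs with h
  · rw [h, sub_self]
  · rw [hf i (by omega), sub_zero]

section
variable (d : L → L) (s : ℤ) (hs : 1 ≤ s)
  (hT : ∀ a, sg μ 1 1 * sg μ 0 a - sg μ 0 a * sg μ 1 1 - sg μ (1 - s) (d a) ∈ O μ (-s))
include hs hT

theorem T_comm (a : L) : sg μ 1 1 * sg μ 0 a - sg μ 0 a * sg μ 1 1 ∈ O μ (1 - s) := by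
  have h1 := O_mono (show -s ≤ 1 - s by omega) (hT a)
  have h2 := add_mem h1 (sg_mem (μ := μ) (d a) (le_refl (1 - s)))
  simpa using h2

theorem Tinv_comm (a : L) : sg μ (-1) 1 * sg μ 0 a - sg μ 0 a * sg μ (-1) 1 ∈ O μ (-1 - s) := by
  have h1 := neg_mem (T_comm d s hs hT a)
  have h2 := O_mul (O_mul (sg_mem (μ := μ) (n := -1) 1 le_rfl) h1 (le_refl _))
    (sg_mem (μ := μ) (n := -1) 1 le_rfl) (show _ ≤ -1 - s by omega)
  have e1 : sg μ (-1) 1 * sg μ 1 1 = 1 := T_mul (-1) 1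
  have e2 : sg μ 1 1 * sg μ (-1) 1 = 1 := T_mul 1 (-1)
  convert h2 using 1
  rw [neg_sub, mul_sub, sub_mul, ← mul_assoc, ← mul_assoc, e1, one_mul, mul_assoc, e2, mul_one]

theorem Tpow_comm (k : ℤ) (a : L) :
    sg μ k 1 * sg μ 0 a - sg μ 0 a * sg μ k 1 - sg μ (k - s) (k * d a) ∈ O μ (k - s - 1) := by
  have step : ∀ k : ℤ, sg μ (k + 1) 1 * sg μ 0 a - sg μ 0 a * sg μ (k + 1) 1
      = sg μ 1 1 * (sg μ k 1 * sg μ 0 a - sg μ 0 a * sg μ k 1)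
        + (sg μ 1 1 * sg μ 0 a - sg μ 0 a * sg μ 1 1) * sg μ k 1 := by
    intro k
    have e : sg μ (k + 1) 1 = sg μ 1 1 * sg μ k 1 := by rw [T_mul, add_comm]
    rw [e]; noncomm_ring
  have right : ∀ k : ℤ, (sg μ 1 1 * sg μ 0 a - sg μ 0 a * sg μ 1 1) * sg μ k 1
      - sg μ (k + 1 - s) (d a) ∈ O μ (k - s) := by
    intro k
    have h := O_mul (hT a) (sg_mem (μ := μ) (n := k) 1 le_rfl) (show _ ≤ k - s by omega)
    rw [sub_mul, sg_mul_T (1 - s) k, show 1 - s + k = k + 1 - s by ring] at h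
    exact h
  induction k using Int.induction_on with
  | zero =>
    have : sg μ 0 (1 : L) = 1 := rfl
    rw [this, one_mul, mul_one, sub_self, zero_sub (sg μ _ _)]
    apply neg_mem
    intro i hi
    rw [cf_sg]; simp
  | succ n ih =>
    generalize (n : ℤ) = k at ih ⊢
    have h1 := O_mul (sg_mem (μ := μ) (n := 1) 1 le_rfl) ih (show _ ≤ k - s by omega)
    have h2 := right k
    have h3 := O_mul (T_comm d s hs hT (k * d a)) (sg_mem (μ := μ) (n := k - s) 1 le_rfl)
      (show _ ≤ k - s by omega)
    have h4 := add_mem (add_mem h1 h2) h3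
    rw [step]
    convert h4 using 1
    · ring_nf
    · have e : sg μ (k + 1 - s) (((k + 1 : ℤ) : L) * d a)
          = sg μ 0 (k * d a) * sg μ 1 1 * sg μ (k - s) 1 + sg μ (k + 1 - s) (d a) := by
        rw [mul_assoc, T_mul, ← sg_eq, show 1 + (k - s) = k + 1 - s by ring, ← sg_add]
        congr 1; push_cast; ring
      rw [e, sg_eq (k - s) (k * d a)]
      noncomm_ring
  | pred n ih =>
    generalize -(n : ℤ) = k at ih ⊢
    have st := step (k - 1)
    rw [show k - 1 + 1 = k by ring] at st
    have h2 := right (k - 1)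
    rw [show k - 1 + 1 - s = k - s by ring] at h2
    have h3 := sub_mem ih (O_mono (show _ ≤ k - s - 1 by omega) h2)
    rw [st] at h3
    have h4 := O_mul (sg_mem (μ := μ) (n := -1) 1 le_rfl) h3 (show _ ≤ k - 1 - s - 1 by omega)
    have h5 := O_mul (Tinv_comm d s hs hT ((k - 1 : ℤ) * d a))
      (sg_mem (μ := μ) (n := k - s) 1 le_rfl) (show _ ≤ k - 1 - s - 1 by omega)
    convert add_mem h4 h5 using 1
    have e1 : sg μ (-1) 1 * sg μ 1 1 = 1 := T_mul (-1) 1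
    have e2 : sg μ (k - s) (k * d a) =
        sg μ 0 ((k - 1 : ℤ) * d a) * sg μ (k - s) 1 + sg μ (k - s) (d a) := by
      rw [← sg_eq, ← sg_add]; congr 1; push_cast; ring
    have e3 : sg μ (k - 1 - s) (((k - 1 : ℤ) : L) * d a) =
        sg μ 0 ((k - 1 : ℤ) * d a) * sg μ (-1) 1 * sg μ (k - s) 1 := by
      rw [mul_assoc, T_mul, ← sg_eq]; congr 1; ring
    rw [e2, e3]
    generalize sg μ (k - 1) 1 * sg μ 0 a - sg μ 0 a * sg μ (k - 1) 1 = X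
    generalize (sg μ 1 1 * sg μ 0 a - sg μ 0 a * sg μ 1 1) * sg μ (k - 1) 1 = Y
    have e4 : X = sg μ (-1) 1 * (sg μ 1 1 * X) := by rw [← mul_assoc, e1, one_mul]
    conv_lhs => rw [e4]
    noncomm_ring

theorem mono_comm (m n : ℤ) (a b : L) :
    sg μ m a * sg μ n b - sg μ n b * sg μ m a - sg μ (m + n - s) (m * a * d b - n * b * d a)
      ∈ O μ (m + n - s - 1) := by
  have h1 := O_mul (O_mul (sg_mem (μ := μ) (n := 0) a le_rfl) (Tpow_comm d s hs hT m b) le_rfl)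
    (sg_mem (μ := μ) (n := n) 1 le_rfl) (show _ ≤ m + n - s - 1 by omega)
  have h2 := O_mul (O_mul (sg_mem (μ := μ) (n := 0) b le_rfl) (Tpow_comm d s hs hT n a) le_rfl)
    (sg_mem (μ := μ) (n := m) 1 le_rfl) (show _ ≤ m + n - s - 1 by omega)
  convert sub_mem h1 h2 using 1
  have e1 : sg μ 0 a * sg μ (m - s) (m * d b) * sg μ n 1 = sg μ (m + n - s) (m * a * d b) := by
    rw [sg0_mul, sg_mul_T]; congr 1 <;> ring
  have e2 : sg μ 0 b * sg μ (n - s) (n * d a) * sg μ m 1 = sg μ (m + n - s) (n * b * d a) := by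
    rw [sg0_mul, sg_mul_T]; congr 1 <;> ring
  have e3 : sg μ 0 a * (sg μ 0 b * sg μ m 1) * sg μ n 1
      = sg μ 0 b * (sg μ 0 a * sg μ n 1) * sg μ m 1 := by
    rw [sg0_mul, sg0_mul, sg0_mul, sg0_mul, sg_mul_T, sg_mul_T]; congr 1 <;> ring
  rw [sg_sub, mul_sub, sub_mul, mul_sub, sub_mul, mul_sub, sub_mul, mul_sub, sub_mul, e1, e2, e3,
    sg_eq m a, sg_eq n b]
  noncomm_ring

theorem comm_aux (k : ℕ) (hk : (k : ℤ) ≤ s) : ∀ (m n : ℤ) (f g : Dm μ), f ∈ O μ m → g ∈ O μ n →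
    f * g - g * f ∈ O μ (m + n - k) := by
  induction k with
  | zero =>
    intro m n f g hf hg
    exact sub_mem (O_mul hf hg (by simp)) (O_mul hg hf (by push_cast; omega))
  | succ k ih =>
    intro m n f g hf hg
    push_cast at hk ⊢
    have ih := ih (by omega)
    have hf' := sub_sg_mem hf
    have hg' := sub_sg_mem hg
    have h0 := mono_comm d s hs hT m n (cf f m) (cf g n)
    have h0' := add_mem (O_mono (show _ ≤ m + n - (k + 1) by omega) h0)
      (sg_mem (μ := μ) (m * cf f m * d (cf g n) - n * cf g n * d (cf f m))
        (show m + n - s ≤ m + n - (k + 1) by omega))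
    rw [sub_add_cancel] at h0'
    have h1 := ih _ _ _ _ (sg_mem (μ := μ) (n := m) (cf f m) le_rfl) hg'
    have h2 := ih _ _ _ _ hf' hg
    have h3 := add_mem (add_mem h0' (O_mono (show _ ≤ m + n - (k + 1) by omega) h1))
      (O_mono (show _ ≤ m + n - (k + 1) by omega) h2)
    convert h3 using 1
    noncomm_ring

theorem comm_mem {m n : ℤ} {f g : Dm μ} (hf : f ∈ O μ m) (hg : g ∈ O μ n) :
    f * g - g * f ∈ O μ (m + n - s) := by
  have := comm_aux d s hs hT s.toNat (by omega) m n f g hf hg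
  rwa [Int.toNat_of_nonneg (by omega)] at this

theorem comm_coeff {m n : ℤ} {f g : Dm μ} (hf : f ∈ O μ m) (hg : g ∈ O μ n) :
    cf (f * g - g * f) (m + n - s) = m * cf f m * d (cf g n) - n * cf g n * d (cf f m) := by
  have hf' := sub_sg_mem hf
  have hg' := sub_sg_mem hg
  have h0 := mono_comm d s hs hT m n (cf f m) (cf g n)
  have h1 := comm_mem d s hs hT (sg_mem (μ := μ) (n := m) (cf f m) le_rfl) hg'
  have h2 := comm_mem d s hs hT hf' hg
  have h3 := add_mem (add_mem h0 (O_mono (show _ ≤ m + n - s - 1 by omega) h1))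
      (O_mono (show _ ≤ m + n - s - 1 by omega) h2)
  have h4 := h3 (m + n - s) (by omega)
  have e : f * g - g * f = (sg μ (m + n - s) (m * cf f m * d (cf g n) - n * cf g n * d (cf f m))) +
    (sg μ m (cf f m) * sg μ n (cf g n) - sg μ n (cf g n) * sg μ m (cf f m) -
          sg μ (m + n - s) (↑m * cf f m * d (cf g n) - ↑n * cf g n * d (cf f m)) +
        (sg μ m (cf f m) * (g - sg μ n (cf g n)) - (g - sg μ n (cf g n)) * sg μ m (cf f m)) +
      ((f - sg μ m (cf f m)) * g - g * (f - sg μ m (cf f m)))) := by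
    generalize sg μ (m + n - s) _ = Z
    noncomm_ring
  rw [e, cf_add, h4, cf_sg, if_pos rfl, add_zero]

theorem leibniz (a b : L) : d (a * b) = a * d b + b * d a := by
  have key : ∀ a, cf (sg μ 1 1 * sg μ 0 a - sg μ 0 a * sg μ 1 1) (1 - s) = d a := by
    intro a
    have := hT a (1 - s) (by omega)
    rw [cf_sub, cf_sg, if_pos rfl] at this
    exact sub_eq_zero.mp this
  have e : sg μ 1 1 * sg μ 0 (a * b) - sg μ 0 (a * b) * sg μ 1 1
    = sg μ 0 a * (sg μ 1 1 * sg μ 0 b - sg μ 0 b * sg μ 1 1)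
      + sg μ 0 b * (sg μ 1 1 * sg μ 0 a - sg μ 0 a * sg μ 1 1)
      + ((sg μ 1 1 * sg μ 0 a - sg μ 0 a * sg μ 1 1) * sg μ 0 b
        - sg μ 0 b * (sg μ 1 1 * sg μ 0 a - sg μ 0 a * sg μ 1 1)) := by
    rw [← sg0_mul]; noncomm_ring
  have h := comm_mem d s hs hT (T_comm d s hs hT a) (sg_mem (μ := μ) (n := 0) b le_rfl) (1 - s)
    (by omega)
  rw [← key (a * b), e, cf_add, cf_add, h, cf_smul, cf_smul, key, key, add_zero]

theorem const_central {c : L} (hc : sg μ 1 1 * sg μ 0 c = sg μ 0 c * sg μ 1 1) (f : Dm μ) :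
    sg μ 0 c * f = f * sg μ 0 c := by
  have h1 : Commute (sg μ 0 c) (sg μ 1 1) := hc.symm
  have e1 : sg μ (-1) 1 * sg μ 1 1 = 1 := T_mul (-1) 1
  have e2 : sg μ 1 1 * sg μ (-1) 1 = 1 := T_mul 1 (-1)
  have h2 : Commute (sg μ 0 c) (sg μ (-1) 1) := by
    show _ = _
    calc sg μ 0 c * sg μ (-1) 1 = sg μ (-1) 1 * (sg μ 1 1 * sg μ 0 c) * sg μ (-1) 1 := by
          rw [← mul_assoc, e1, one_mul]
      _ = sg μ (-1) 1 * sg μ 0 c := by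
          rw [hc, mul_assoc, mul_assoc, e2, mul_one]
  have h3 : ∀ k : ℤ, Commute (sg μ 0 c) (sg μ k 1) := by
    intro k
    induction k using Int.induction_on with
    | zero => exact Commute.one_right _
    | succ n ih => rw [← T_mul]; exact ih.mul_right h1
    | pred n ih => rw [sub_eq_add_neg, ← T_mul]; exact ih.mul_right h2
  have h4 : ∀ (k : ℤ) (a : L), Commute (sg μ 0 c) (sg μ k a) := by
    intro k a
    rw [sg_eq k a]
    refine Commute.mul_right ?_ (h3 k)
    show _ = _
    rw [sg0_mul, sg0_mul, mul_comm]
  have h5 : ∀ (k : ℕ) (n : ℤ) (f : Dm μ), f ∈ O μ n →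
      sg μ 0 c * f - f * sg μ 0 c ∈ O μ (n - k) := by
    intro k
    induction k with
    | zero =>
      intro n f hf
      have := sg_mem (μ := μ) (n := 0) c le_rfl
      exact sub_mem (O_mul this hf (by simp)) (O_mul hf this (by simp))
    | succ k ih =>
      intro n f hf
      have h := ih _ _ (sub_sg_mem hf)
      have e : sg μ 0 c * (f - sg μ n (cf f n)) - (f - sg μ n (cf f n)) * sg μ 0 c
        = sg μ 0 c * f - f * sg μ 0 c := by
        rw [mul_sub, sub_mul, (h4 n (cf f n)).eq]; abel
      rw [e] at h
      exact O_mono (by push_cast; omega) h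
  by_cases hf : f = 0
  · rw [hf, mul_zero, zero_mul]
  obtain ⟨n, hn⟩ := isDeg_exists hf
  rw [← sub_eq_zero]
  apply cf_ext
  intro i
  exact h5 (n - i + 1).toNat n f hn.mem i (by omega)

theorem IsDeg.pow {f : Dm μ} {n : ℤ} (h : IsDeg f n) (k : ℕ) : IsDeg (f ^ k) (k * n) := by
  induction k with
  | zero =>
    have h1 : IsDeg (1 : Dm μ) 0 := isDeg_sg one_ne_zero
    simpa using h1
  | succ k ih =>
    rw [pow_succ]
    convert ih.mul h using 1
    push_cast; ring

theorem comm_pow {v w : Dm μ} {n e : ℤ} (hw : IsDeg w n) (hX : v * w - w * v ∈ O μ e) (k : ℕ) :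
    v * w ^ (k + 1) - w ^ (k + 1) * v - (k + 1 : ℕ) • ((v * w - w * v) * w ^ k)
      ∈ O μ (e + k * n - s) := by
  induction k with
  | zero => simp [zero_mem]
  | succ k ih =>
    have h1 := O_mul ih hw.mem (show _ ≤ e + (k + 1 : ℕ) * n - s by push_cast; linarith)
    have h2 := O_mono (show _ ≤ e + (k + 1 : ℕ) * n - s by omega)
      (comm_mem d s hs hT (hw.pow d s hs hT (k + 1)).mem hX)
    have h3 := add_mem h1 h2
    convert h3 using 1
    rw [succ_nsmul _ (k + 1), sub_mul _ _ w, smul_mul_assoc, mul_assoc _ (w ^ k) w, ← pow_succ,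
      pow_succ w (k + 1)]
    generalize (k + 1) • ((v * w - w * v) * w ^ (k + 1)) = Z
    have hc : w ^ (k + 1) * w = w * w ^ (k + 1) := (pow_succ' w (k+1) ▸ (pow_succ w (k+1)).symm)
    generalize w ^ (k + 1) = P at *
    noncomm_ring

theorem cf_nsmul (k : ℕ) (f : Dm μ) (i : ℤ) : cf (k • f) i = k * cf f i := by
  induction k with
  | zero => simp [cf_zero]
  | succ k ih => rw [succ_nsmul, cf_add, ih]; push_cast; ring

theorem comm_pow_deg [CharZero L] {v w : Dm μ} {n e : ℤ} (hw : IsDeg w n)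
    (hX : IsDeg (v * w - w * v) e) (k : ℕ) :
    IsDeg (v * w ^ (k + 1) - w ^ (k + 1) * v) (e + k * n) := by
  have h1 := comm_pow d s hs hT hw hX.mem k
  have h2 := hX.mul (hw.pow d s hs hT k)
  set A := v * w ^ (k + 1) - w ^ (k + 1) * v
  set B := (v * w - w * v) * w ^ k
  have hA : ∀ i, e + k * n - s < i → cf A i = (k + 1 : ℕ) * cf B i := by
    intro i hi
    have := h1 i hi
    rw [cf_sub, cf_nsmul d s hs hT] at this
    exact sub_eq_zero.mp this
  constructor
  · rw [hA _ (by omega)]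
    exact mul_ne_zero (Nat.cast_ne_zero.mpr (by omega)) h2.1
  · intro i hi
    rw [hA _ (by omega), h2.2 i hi, mul_zero]

variable (hK : ∀ c, d c = 0 → ∀ f : Dm μ, sg μ 0 c * f = f * sg μ 0 c)
include hK

theorem main_step [CharZero L] {z : Dm μ} {m : ℤ} (hz : IsDeg z m) (hm : m ≠ 0) (k : ℕ) :
    ∀ (v w : Dm μ) (p q : ℤ), Commute z v → Commute z w → IsDeg v p → IsDeg w q →
      IsDeg (v * w - w * v) (p + q - k) → False := by
  induction k using Nat.strong_induction_on with
  | _ k ih =>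
  -- the case when degrees have equal signs
  have core : ∀ (v w : Dm μ) (p q : ℤ) (P Q : ℕ), Commute z v → Commute z w → IsDeg v p →
      IsDeg w q → IsDeg (v * w - w * v) (p + q - k) → (P + 1 : ℕ) * q = (Q + 1 : ℕ) * p → False := by
    intro v w p q P Q hv hw hp hq hX hPQ
    have hu := hq.pow d s hs hT (P + 1)
    have hy := hp.pow d s hs hT (Q + 1)
    rw [← hPQ] at hy
    have hcu := hw.pow_right (P + 1)
    have hcy := hv.pow_right (Q + 1)
    have hX' := comm_pow_deg d s hs hT hq hX P
    have hvy : Commute v (v ^ (Q + 1)) := Commute.self_pow v (Q + 1)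
    set u := w ^ (P + 1)
    set y := v ^ (Q + 1)
    set N : ℤ := (P + 1 : ℕ) * q with hN
    have r1 := comm_coeff d s hs hT hz.mem hu.mem
    have r2 := comm_coeff d s hs hT hz.mem hy.mem
    rw [hcu.eq, sub_self, cf_zero] at r1
    rw [hcy.eq, sub_self, cf_zero] at r2
    set a := cf z m
    set b := cf u N
    set b' := cf y N
    have ha : a ≠ 0 := hz.1
    have hb : b ≠ 0 := hu.1
    have hb' : b' ≠ 0 := hy.1
    have hmL : (m : L) ≠ 0 := Int.cast_ne_zero.mpr hm
    set c := b / b' with hc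
    have hcb : b = c * b' := by rw [hc]; field_simp
    have hdc : d c = 0 := by
      have h1 : d b * b' = d b' * b := by
        have : (m * a) * (d b * b' - d b' * b) = 0 := by linear_combination b * r2 - b' * r1
        rcases mul_eq_zero.mp this with h | h
        · exact absurd h (mul_ne_zero hmL ha)
        · exact sub_eq_zero.mp h
      have h2 := leibniz d s hs hT c b'
      rw [← hcb] at h2
      have : d c * (b' * b') = 0 := by
        rw [h2] at h1
        linear_combination h1 + d b' * hcb
      rcases mul_eq_zero.mp this with h | h
      · exact h
      · exact absurd h (mul_ne_zero hb' hb')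
    have hcen := hK c hdc
    have cC : ∀ f : Dm μ, Commute f (sg μ 0 c) := fun f => (hcen f).symm
    set w' := u - sg μ 0 c * y with hw'
    have hw'mem : w' ∈ O μ (N - 1) := by
      intro i hi
      rw [hw', cf_sub, cf_smul]
      rcases eq_or_lt_of_le (show N ≤ i by omega) with h | h
      · rw [← h]; show b - c * b' = 0
        rw [hcb, sub_self]
      · rw [hu.2 i h, hy.2 i h]; simp
    have hzw' : Commute z w' := hcu.sub_right ((cC z).mul_right hcy)
    have hvw' : v * w' - w' * v = v * u - u * v := by
      have := ((cC v).mul_right hvy).eq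
      rw [hw', mul_sub, sub_mul, this]; abel
    rw [← hvw'] at hX'
    have hw0 : w' ≠ 0 := by
      intro h
      apply hX'.ne_zero
      rw [h]; simp
    obtain ⟨N', hN'⟩ := isDeg_exists hw0
    have hle := hN'.le_of_mem hw'mem
    have hle2 := hX'.le_of_mem (comm_mem d s hs hT hp.mem hN'.mem)
    have eN : N = P * q + q := by rw [hN]; push_cast; ring
    obtain ⟨k', hk'⟩ : ∃ k' : ℕ, (k' : ℤ) = k - (N - N') :=
      ⟨(k - (N - N')).toNat, Int.toNat_of_nonneg (by omega)⟩
    refine ih k' (by omega) v w' p N' hv hzw' hp hN' ?_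
    convert hX' using 1
    omega
  intro v w p q hv hw hp hq hX
  -- multiply by a power of z
  set l : ℕ := p.natAbs + q.natAbs + 1 with hl
  have hzl := hz.pow d s hs hT l
  have hzz : Commute z (z ^ l) := Commute.self_pow z l
  have hvl : Commute (z ^ l) v := hv.pow_left l
  have hwl : Commute (z ^ l) w := hw.pow_left l
  have hX2 : IsDeg ((v * z ^ l) * (w * z ^ l) - (w * z ^ l) * (v * z ^ l))
      ((p + l * m) + (q + l * m) - k) := by
    have h := (hX.mul hzl).mul hzl
    convert h using 1
    · have e1 : (v * z ^ l) * (w * z ^ l) = v * w * z ^ l * z ^ l := by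
        rw [mul_assoc, ← mul_assoc (z ^ l) w, hwl.eq]; simp only [mul_assoc]
      have e2 : (w * z ^ l) * (v * z ^ l) = w * v * z ^ l * z ^ l := by
        rw [mul_assoc, ← mul_assoc (z ^ l) v, hvl.eq]; simp only [mul_assoc]
      rw [e1, e2, sub_mul, sub_mul]
    · ring
  have hsign : ∃ P Q : ℕ, (P + 1 : ℕ) * (q + l * m) = (Q + 1 : ℕ) * (p + l * m) := by
    rcases lt_or_gt_of_ne hm with h | h
    · have hb : (l : ℤ) * m ≤ -l := by nlinarith
      refine ⟨(-(p + l * m) - 1).toNat, (-(q + l * m) - 1).toNat, ?_⟩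
      push_cast
      rw [Int.toNat_of_nonneg (by omega), Int.toNat_of_nonneg (by omega)]
      ring
    · have hb : (l : ℤ) ≤ l * m := by nlinarith
      refine ⟨((p + l * m) - 1).toNat, ((q + l * m) - 1).toNat, ?_⟩
      push_cast
      rw [Int.toNat_of_nonneg (by omega), Int.toNat_of_nonneg (by omega)]
      ring
  obtain ⟨P, Q, hPQ⟩ := hsign
  exact core (v * z ^ l) (w * z ^ l) _ _ P Q (hv.mul_right hzz) (hw.mul_right hzz)
    (hp.mul hzl) (hq.mul hzl) hX2 hPQ

theorem main_nonzero [CharZero L] {z : Dm μ} {m : ℤ} (hz : IsDeg z m) (hm : m ≠ 0)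
    {v w : Dm μ} (hv : Commute z v) (hw : Commute z w) : v * w = w * v := by
  by_contra hne
  have hX : v * w - w * v ≠ 0 := sub_ne_zero.mpr hne
  have hv0 : v ≠ 0 := by rintro rfl; simp at hne
  have hw0 : w ≠ 0 := by rintro rfl; simp at hne
  obtain ⟨p, hp⟩ := isDeg_exists hv0
  obtain ⟨q, hq⟩ := isDeg_exists hw0
  obtain ⟨e, he⟩ := isDeg_exists hX
  have hle := he.le_of_mem (comm_mem d s hs hT hp.mem hq.mem)
  refine main_step d s hs hT hK hz hm (p + q - e).toNat v w p q hv hw hp hq ?_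
  rw [Int.toNat_of_nonneg (by omega)]
  convert he using 1
  ring

theorem main_all [CharZero L] {z : Dm μ} (hz : ∀ c, d c = 0 → z ≠ sg μ 0 c)
    {v w : Dm μ} (hv : Commute z v) (hw : Commute z w) : v * w = w * v := by
  by_cases h0 : z = 0
  · exfalso
    have hd : d 0 = 0 := by simpa using leibniz d s hs hT 0 0
    apply hz 0 hd
    rw [h0]
    exact cf_ext fun i => by simp [cf_sg, cf_zero]
  obtain ⟨m, hm⟩ := isDeg_exists h0
  by_cases hm0 : m = 0
  swap
  · exact main_nonzero d s hs hT hK hm hm0 hv hw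
  subst hm0
  by_cases hd : d (cf z 0) = 0
  · have hne : z - sg μ 0 (cf z 0) ≠ 0 := sub_ne_zero.mpr (hz _ hd)
    obtain ⟨n, hn⟩ := isDeg_exists hne
    have hle := hn.le_of_mem (sub_sg_mem hm.mem)
    have hc := hK _ hd
    exact main_nonzero d s hs hT hK hn (by omega) (hv.sub_left (hc v)) (hw.sub_left (hc w))
  · have key : ∀ x : Dm μ, Commute z x → ∀ n, IsDeg x n → n = 0 := by
      intro x hx n hn
      have r := comm_coeff d s hs hT hm.mem hn.mem
      rw [hx.eq, sub_self, cf_zero] at r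
      have r' : (n : L) * (cf x n * d (cf z 0)) = 0 := by
        push_cast at r; linear_combination r
      rcases mul_eq_zero.mp r' with h | h
      · exact Int.cast_eq_zero.mp h
      · exact absurd h (mul_ne_zero hn.1 hd)
    by_contra hne
    have hX : v * w - w * v ≠ 0 := sub_ne_zero.mpr hne
    have hv0 : v ≠ 0 := by rintro rfl; simp at hne
    have hw0 : w ≠ 0 := by rintro rfl; simp at hne
    obtain ⟨p, hp⟩ := isDeg_exists hv0
    obtain ⟨q, hq⟩ := isDeg_exists hw0
    obtain ⟨e, he⟩ := isDeg_exists hX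
    have hle := he.le_of_mem (comm_mem d s hs hT hp.mem hq.mem)
    have h1 := key _ hv _ hp
    have h2 := key _ hw _ hq
    have h3 := key _ ((hv.mul_right hw).sub_right (hw.mul_right hv)) _ he
    omega

end

end CCC

open InvLaurent in
/-- let `L` have characteristic `0`, let `·` be a deformed Laurent series product
on `D = L((T⁻¹))` with `T·a = aT + Σ_{i≤0} δ_i(a)T^i`, with some `δ_i ≠ 0`, let `i₀` be the
largest `i ≤ 0` with `δ_i ≠ 0`, and let `K = ∩_{i≤0} Ker δ_i` (the center of `D`).  If `K` is
algebraically closed and `Ker δ_{i₀} = K`, then `D` satisfies the commutative centralizer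
condition: for every `z ∈ D \ K`, any two elements commuting with `z` commute with each other. -/
theorem deformedProduct_ccc (L : Type*) [Field L] [CharZero L]
    (μ : DeformedProduct L) (δ : ℤ → L → L) (hδ : HasDelta μ δ)
    (i₀ : ℤ) (hi₀ : i₀ ≤ 0) (hi₀ne : ∃ a : L, δ i₀ a ≠ 0)
    (hi₀max : ∀ i : ℤ, i₀ < i → i ≤ 0 → ∀ a : L, δ i a = 0)
    (F : Subfield L) (hF : (F : Set L) = {b : L | ∀ i : ℤ, i ≤ 0 → δ i b = 0})
    (hAC : IsAlgClosed F)
    (hker : {b : L | δ i₀ b = 0} = {b : L | ∀ i : ℤ, i ≤ 0 → δ i b = 0}) :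
    ∀ z : InvLaurent L,
      (¬ ∃ b ∈ {b : L | ∀ i : ℤ, i ≤ 0 → δ i b = 0}, z = single 0 b) →
      ∀ w₁ w₂ : InvLaurent L,
        μ.mul z w₁ = μ.mul w₁ z → μ.mul z w₂ = μ.mul w₂ z →
        μ.mul w₁ w₂ = μ.mul w₂ w₁ := by
  intro z hz w₁ w₂ h1 h2
  have hT1 : ∀ a : L, ∀ i, CCC.cf (CCC.sg μ 1 1 * CCC.sg μ 0 a) i =
      if i = 1 then a else if i ≤ 0 then δ i a else 0 := fun a i => hδ a i
  have hT : ∀ a, CCC.sg μ 1 1 * CCC.sg μ 0 a - CCC.sg μ 0 a * CCC.sg μ 1 1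
      - CCC.sg μ (1 - (1 - i₀)) (δ i₀ a) ∈ CCC.O μ (-(1 - i₀)) := by
    intro a i hi
    rw [CCC.cf_sub, CCC.cf_sub, hT1, ← CCC.sg_eq, CCC.cf_sg, CCC.cf_sg]
    by_cases e1 : i = 1
    · rw [if_pos e1, if_pos e1, if_neg (by omega)]; simp
    rw [if_neg e1, if_neg e1]
    by_cases e2 : i = i₀
    · rw [if_pos (by omega), if_pos (by omega), e2]; simp
    rw [if_neg (show ¬ i = 1 - (1 - i₀) by omega)]
    split_ifs with e3
    · rw [hi₀max i (by omega) e3]; simp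
    · simp
  have hK : ∀ c, δ i₀ c = 0 → ∀ f : CCC.Dm μ, CCC.sg μ 0 c * f = f * CCC.sg μ 0 c := by
    intro c hc
    have hc' : ∀ i : ℤ, i ≤ 0 → δ i c = 0 := by
      have : c ∈ {b : L | δ i₀ b = 0} := hc
      rw [hker] at this
      exact this
    apply CCC.const_central (δ i₀) (1 - i₀) (by omega) hT
    apply CCC.cf_ext
    intro i
    rw [hT1, ← CCC.sg_eq, CCC.cf_sg]
    split_ifs with e1 e2
    · rfl
    · exact hc' i e2
    · rfl
  refine CCC.main_all (μ := μ) (δ i₀) (1 - i₀) (by omega) hT hK (z := z) ?_ (v := w₁) (w := w₂) h1 h2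
  intro c hc hzc
  apply hz
  refine ⟨c, ?_, hzc⟩
  rw [← hker]
  exact hc
end
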